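/- Let β > 0. There exists a constant C > 0 depending only on β such that for all integers n ≥ 3, |Σ_{1≤a<b<c≤n} a^{−2/(2+β)}·b^{−1}·c^{−(2+2β)/(2+β)} − ((2+β)/β)²·log n| ≤ C. -/

import Mathlib

/-!
In a sum of `a ^ (-x) * b ^ (-y) * c ^ (-z)` with `x + y + z = 3`, sum over `a < b` first, then over
`b < c`, then over `c`. For a power with nonzero exponent, a sum differs from the corresponding
integral by at most the variation of the power, so weighting by a power and summing turns
`C * k ^ p + O(k ^ (p - δ))` into an expansion of the same shape, as long as the main and the error
exponents both stay positive. Two such summations give `1 / ((1 - x) * (z - 1))` times `c ^ (z - 1)`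
up to a power saving; multiplied by `c ^ (-z)` this is a multiple of `1 / c` plus a summable error,
and the harmonic sum produces the logarithm.
-/

open Asymptotics Filter Finset

section SumIntegral

variable {f : ℝ → ℝ} {m n : ℕ}

lemma abs_sum_Ico_sub_integral_le_of_monotoneOn (hmn : m ≤ n)
    (hf : MonotoneOn f (Set.Icc m n)) :
    |∑ k ∈ Ico m n, f k - ∫ x in m..n, f x| ≤ |f n - f m| := by
  have hlower := hf.sum_le_integral_Ico hmn
  have hupper := hf.integral_le_sum_Ico hmn
  have htelescope := sum_Ico_sub (fun k : ℕ ↦ f k) hmn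
  rw [sum_sub_distrib] at htelescope
  rw [abs_sub_comm, abs_of_nonneg (by linarith)]
  exact le_trans (by linarith) (le_abs_self _)

lemma abs_sum_Ico_sub_integral_le_of_antitoneOn (hmn : m ≤ n)
    (hf : AntitoneOn f (Set.Icc m n)) :
    |∑ k ∈ Ico m n, f k - ∫ x in m..n, f x| ≤ |f n - f m| := by
  have h := abs_sum_Ico_sub_integral_le_of_monotoneOn hmn hf.neg
  simp only [sum_neg_distrib, intervalIntegral.integral_neg] at h
  rwa [← neg_sub', abs_neg, ← neg_sub', abs_neg] at h

end SumIntegral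

lemma abs_sum_Ico_rpow_sub_le {p : ℝ} (hp : p ≠ 0) {m n : ℕ} (hm : 0 < m) (hmn : m ≤ n) :
    |∑ k ∈ Ico m n, (k : ℝ) ^ (p - 1) - ((n : ℝ) ^ p - (m : ℝ) ^ p) / p| ≤
      |(n : ℝ) ^ (p - 1) - (m : ℝ) ^ (p - 1)| := by
  have hm' : (0 : ℝ) < m := mod_cast hm
  have hn' : (0 : ℝ) < n := mod_cast hm.trans_le hmn
  have hintegral : ∫ x in (m : ℝ)..n, x ^ (p - 1) = ((n : ℝ) ^ p - (m : ℝ) ^ p) / p := by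
    rw [integral_rpow (.inr ⟨by simpa [sub_eq_neg_self] using hp,
      Set.notMem_uIcc_of_lt hm' hn'⟩), sub_add_cancel]
  have hsubset : Set.Icc (m : ℝ) n ⊆ Set.Ioi 0 := fun _ hx ↦ hm'.trans_le hx.1
  rw [← hintegral]
  rcases le_total p 1 with hp1 | hp1
  · exact abs_sum_Ico_sub_integral_le_of_antitoneOn hmn
      ((Real.antitoneOn_rpow_Ioi_of_exponent_nonpos (sub_nonpos.2 hp1)).mono hsubset)
  · exact abs_sum_Ico_sub_integral_le_of_monotoneOn hmn
      ((Real.monotoneOn_rpow_Ici_of_exponent_nonneg (sub_nonneg.2 hp1)).mono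
        (hsubset.trans Set.Ioi_subset_Ici_self))

lemma isBigO_natCast_rpow_rpow {p q : ℝ} (hpq : p ≤ q) :
    (fun n : ℕ ↦ (n : ℝ) ^ p) =O[atTop] (fun n : ℕ ↦ (n : ℝ) ^ q) :=
  .of_norm_eventuallyLE <| by
    filter_upwards [eventually_ge_atTop 1] with n hn
    rw [Real.norm_of_nonneg (by positivity)]
    exact Real.rpow_le_rpow_of_exponent_le (mod_cast hn) hpq

lemma isBigO_const_natCast_rpow (a : ℝ) {q : ℝ} (hq : 0 ≤ q) :
    (fun _ : ℕ ↦ a) =O[atTop] (fun n : ℕ ↦ (n : ℝ) ^ q) :=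
  (isBigO_const_const a one_ne_zero atTop).trans (by simpa using isBigO_natCast_rpow_rpow hq)

lemma isBigO_sum_Ico_rpow_sub {p q : ℝ} (hp : p ≠ 0) (hq : 0 ≤ q) (hpq : p - 1 ≤ q) :
    (fun n : ℕ ↦ ∑ k ∈ Ico 1 n, (k : ℝ) ^ (p - 1) - (n : ℝ) ^ p / p)
      =O[atTop] (fun n : ℕ ↦ (n : ℝ) ^ q) := by
  have herror : (fun n : ℕ ↦ ∑ k ∈ Ico 1 n, (k : ℝ) ^ (p - 1) - ((n : ℝ) ^ p - 1) / p)
      =O[atTop] (fun n : ℕ ↦ (n : ℝ) ^ q) := by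
    refine .trans (.of_norm_eventuallyLE ?_)
      ((isBigO_natCast_rpow_rpow hpq).sub (isBigO_const_natCast_rpow 1 hq)).norm_left
    filter_upwards [eventually_ge_atTop 1] with n hn
    simpa using abs_sum_Ico_rpow_sub_le hp one_pos hn
  refine (herror.sub (isBigO_const_natCast_rpow (1 / p) hq)).congr_left fun n ↦ ?_
  ring

lemma isBigO_sum_Ico_of_isBigO_rpow {E : Type*} [SeminormedAddCommGroup E] {f : ℕ → E}
    {q : ℝ} (hq : 0 < q) (hf : f =O[atTop] (fun k : ℕ ↦ (k : ℝ) ^ (q - 1))) :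
    (fun n ↦ ∑ k ∈ Ico 1 n, f k) =O[atTop] (fun n : ℕ ↦ (n : ℝ) ^ q) := by
  obtain ⟨C, hC, hbound⟩ := bound_of_isBigO_nat_atTop hf
  have hrpow : (fun n : ℕ ↦ ∑ k ∈ Ico 1 n, (k : ℝ) ^ (q - 1))
      =O[atTop] (fun n : ℕ ↦ (n : ℝ) ^ q) := by
    have hsub := isBigO_sum_Ico_rpow_sub hq.ne' hq.le (sub_le_self q zero_le_one)
    simpa [div_eq_inv_mul] using hsub.add
      ((isBigO_refl (fun n : ℕ ↦ (n : ℝ) ^ q) atTop).const_mul_left q⁻¹)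
  refine .trans (.of_bound C (.of_forall fun n ↦ ?_)) hrpow
  calc ‖∑ k ∈ Ico 1 n, f k‖ ≤ ∑ k ∈ Ico 1 n, C * (k : ℝ) ^ (q - 1) := by
        refine norm_sum_le_of_le _ fun k hk ↦ ?_
        have hk0 : (0 : ℝ) < k := mod_cast (mem_Ico.1 hk).1
        have hkq : 0 < (k : ℝ) ^ (q - 1) := Real.rpow_pos_of_pos hk0 _
        simpa only [Real.norm_of_nonneg hkq.le] using hbound hkq.ne'
    _ ≤ C * ‖∑ k ∈ Ico 1 n, (k : ℝ) ^ (q - 1)‖ := by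
        rw [← mul_sum]
        gcongr
        exact Real.le_norm_self _

section PartialSums

variable {f : ℕ → ℝ} {a p q : ℝ}

lemma isBigO_sum_Ico_sub_rpow (hp : p ≠ 0) (hq : 0 < q) (hpq : p - 1 ≤ q)
    (hf : (fun k : ℕ ↦ f k - a * (k : ℝ) ^ (p - 1)) =O[atTop] (fun k : ℕ ↦ (k : ℝ) ^ (q - 1))) :
    (fun n : ℕ ↦ ∑ k ∈ Ico 1 n, f k - a / p * (n : ℝ) ^ p)
      =O[atTop] (fun n : ℕ ↦ (n : ℝ) ^ q) := by
  refine ((isBigO_sum_Ico_of_isBigO_rpow hq hf).add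
    ((isBigO_sum_Ico_rpow_sub hp hq.le hpq).const_mul_left a)).congr_left fun n ↦ ?_
  rw [sum_sub_distrib, ← mul_sum]
  ring

lemma isBigO_sum_Icc_sub_log (hq : q < -1)
    (hf : (fun k : ℕ ↦ f k - a * (k : ℝ)⁻¹) =O[atTop] (fun k : ℕ ↦ (k : ℝ) ^ q)) :
    (fun n : ℕ ↦ ∑ k ∈ Icc 1 n, f k - a * Real.log n) =O[atTop] (fun _ ↦ (1 : ℝ)) := by
  have hrest : (fun n : ℕ ↦ ∑ k ∈ Icc 1 n, (f k - a * (k : ℝ)⁻¹)) =O[atTop] (fun _ ↦ (1 : ℝ)) := by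
    have hsummable := (summable_nat_add_iff 1).2 <|
      summable_of_isBigO_nat (Real.summable_nat_rpow.2 hq) hf
    simpa only [← Ico_add_one_right_eq_Icc, sum_Ico_eq_sum_range, add_comm 1, add_tsub_cancel_right]
      using hsummable.hasSum.tendsto_sum_nat.isBigO_one ℝ
  have hharmonic := (Real.tendsto_harmonic_sub_log.isBigO_one ℝ).const_mul_left a
  refine (hrest.add hharmonic).congr_left fun n ↦ ?_
  rw [sum_sub_distrib, ← mul_sum, harmonic_eq_sum_Icc]
  push_cast
  ring

lemma isBigO_rpow_mul_sub (r : ℝ)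
    (hf : (fun k : ℕ ↦ f k - a * (k : ℝ) ^ p) =O[atTop] (fun k : ℕ ↦ (k : ℝ) ^ q)) :
    (fun k : ℕ ↦ (k : ℝ) ^ r * f k - a * (k : ℝ) ^ (r + p))
      =O[atTop] (fun k : ℕ ↦ (k : ℝ) ^ (r + q)) := by
  refine ((isBigO_refl (fun k : ℕ ↦ (k : ℝ) ^ r) atTop).mul_atTop_rpow_natCast_of_isBigO_rpow
    r q _ hf le_rfl).congr' ?_ .rfl
  filter_upwards [eventually_gt_atTop 0] with k hk
  rw [Pi.mul_apply, Real.rpow_add (mod_cast hk)]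
  ring

end PartialSums

lemma sum_Icc_Ioc_Ioc_eq_sum_Icc_Ico_Ico {M : Type*} [AddCommMonoid M] (f : ℕ → ℕ → ℕ → M)
    (n : ℕ) :
    ∑ a ∈ Icc 1 n, ∑ b ∈ Ioc a n, ∑ c ∈ Ioc b n, f a b c =
      ∑ c ∈ Icc 1 n, ∑ b ∈ Ico 1 c, ∑ a ∈ Ico 1 b, f a b c := by
  calc ∑ a ∈ Icc 1 n, ∑ b ∈ Ioc a n, ∑ c ∈ Ioc b n, f a b c
      = ∑ b ∈ Icc 1 n, ∑ a ∈ Ico 1 b, ∑ c ∈ Ioc b n, f a b c :=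
        sum_comm' fun a b ↦ by simp only [mem_Icc, mem_Ioc, mem_Ico]; omega
    _ = ∑ b ∈ Icc 1 n, ∑ c ∈ Ioc b n, ∑ a ∈ Ico 1 b, f a b c :=
        sum_congr rfl fun _ _ ↦ sum_comm
    _ = ∑ c ∈ Icc 1 n, ∑ b ∈ Ico 1 c, ∑ a ∈ Ico 1 b, f a b c :=
        sum_comm' fun b c ↦ by simp only [mem_Icc, mem_Ioc, mem_Ico]; omega

lemma isBigO_iterated_sum_rpow_sub_log {x y z : ℝ} (hx : x < 1) (hz : 1 < z)
    (hxyz : x + y + z = 3) :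
    (fun n : ℕ ↦ ∑ c ∈ Icc 1 n, (c : ℝ) ^ (-z) *
        ∑ b ∈ Ico 1 c, (b : ℝ) ^ (-y) * ∑ a ∈ Ico 1 b, (a : ℝ) ^ (-x)
      - 1 / ((1 - x) * (z - 1)) * Real.log n) =O[atTop] (fun _ ↦ (1 : ℝ)) := by
  obtain ⟨δ, hδ0, hδ⟩ : ∃ δ, 0 < δ ∧ δ < min 1 (min (1 - x) (z - 1)) :=
    exists_between (by simp [hx, hz])
  simp only [lt_min_iff] at hδ
  have hinner : (fun b : ℕ ↦ ∑ a ∈ Ico 1 b, (a : ℝ) ^ (-x) - 1 / (1 - x) * (b : ℝ) ^ (1 - x))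
      =O[atTop] (fun b : ℕ ↦ (b : ℝ) ^ (1 - x - δ)) := by
    have h := isBigO_sum_Ico_rpow_sub (p := 1 - x) (q := 1 - x - δ)
      (by linarith) (by linarith) (by linarith)
    simpa only [sub_sub_cancel_left, div_eq_inv_mul, mul_one] using h
  have hmiddle : (fun c : ℕ ↦ ∑ b ∈ Ico 1 c, (b : ℝ) ^ (-y) * ∑ a ∈ Ico 1 b, (a : ℝ) ^ (-x)
      - 1 / (1 - x) / (z - 1) * (c : ℝ) ^ (z - 1))
      =O[atTop] (fun c : ℕ ↦ (c : ℝ) ^ (z - 1 - δ)) := by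
    have hterm := isBigO_rpow_mul_sub (-y) hinner
    rw [show -y + (1 - x) = z - 1 - 1 by linarith,
      show -y + (1 - x - δ) = z - 1 - δ - 1 by linarith] at hterm
    exact isBigO_sum_Ico_sub_rpow (by linarith) (by linarith) (by linarith) hterm
  have houter : (fun c : ℕ ↦ (c : ℝ) ^ (-z) * ∑ b ∈ Ico 1 c, (b : ℝ) ^ (-y) *
      ∑ a ∈ Ico 1 b, (a : ℝ) ^ (-x) - 1 / (1 - x) / (z - 1) * (c : ℝ)⁻¹)
      =O[atTop] (fun c : ℕ ↦ (c : ℝ) ^ (-1 - δ)) := by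
    have hterm := isBigO_rpow_mul_sub (-z) hmiddle
    rw [show -z + (z - 1) = -1 by ring, show -z + (z - 1 - δ) = -1 - δ by ring] at hterm
    simpa only [Real.rpow_neg_one] using hterm
  rw [← div_div]
  exact isBigO_sum_Icc_sub_log (by linarith) houter

theorem triple_sum_log_estimate_general {x y z : ℝ} (hx : x < 1) (hz : 1 < z)
    (hxyz : x + y + z = 3) :
    ∃ C : ℝ, 0 < C ∧ ∀ n : ℕ, 1 ≤ n →
      |(∑ a ∈ Finset.Icc 1 n, ∑ b ∈ Finset.Ioc a n, ∑ c ∈ Finset.Ioc b n,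
          (a : ℝ) ^ (-x) * (b : ℝ) ^ (-y) * (c : ℝ) ^ (-z))
        - 1 / ((1 - x) * (z - 1)) * Real.log n| ≤ C := by
  obtain ⟨C, hC, hbound⟩ :=
    bound_of_isBigO_nat_atTop (isBigO_iterated_sum_rpow_sub_log hx hz hxyz)
  refine ⟨C, hC, fun n _ ↦ ?_⟩
  rw [sum_Icc_Ioc_Ioc_eq_sum_Icc_Ico_Ico]
  simpa [mul_sum, mul_comm, mul_assoc, mul_left_comm] using hbound (x := n) one_ne_zero

/-- The triple-sum estimate behind Proposition 4.1: for `β > 0` there is `C > 0` depending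
only on `β` such that for all `n ≥ 3`,
`|Σ_{1≤a<b<c≤n} a^{−2/(2+β)} b^{−1} c^{−(2+2β)/(2+β)} − ((2+β)/β)² log n| ≤ C`. -/
theorem triple_sum_log_estimate (β : ℝ) (hβ : 0 < β) :
    ∃ C : ℝ, 0 < C ∧ ∀ n : ℕ, 3 ≤ n →
      |(∑ a ∈ Finset.Icc 1 n, ∑ b ∈ Finset.Ioc a n, ∑ c ∈ Finset.Ioc b n,
          (a : ℝ) ^ (-(2 / (2 + β))) * (b : ℝ)⁻¹ * (c : ℝ) ^ (-((2 + 2 * β) / (2 + β))))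
        - ((2 + β) / β) ^ 2 * Real.log n| ≤ C := by
  have hx : 2 / (2 + β) < 1 := by rw [div_lt_one (by positivity)]; linarith
  have hz : 1 < (2 + 2 * β) / (2 + β) := by rw [one_lt_div (by positivity)]; linarith
  have hxyz : 2 / (2 + β) + 1 + (2 + 2 * β) / (2 + β) = 3 := by field_simp; ring
  have hconst : 1 / ((1 - 2 / (2 + β)) * ((2 + 2 * β) / (2 + β) - 1)) = ((2 + β) / β) ^ 2 := by
    have hx' : 1 - 2 / (2 + β) = β / (2 + β) := by field_simp; ring
    have hz' : (2 + 2 * β) / (2 + β) - 1 = β / (2 + β) := by field_simp; ring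
    rw [hx', hz', ← sq, ← one_div_pow, one_div_div]
  obtain ⟨C, hC, hbound⟩ := triple_sum_log_estimate_general hx hz hxyz
  simp only [Real.rpow_neg_one, hconst] at hbound
  exact ⟨C, hC, fun n hn ↦ hbound n (by omega)⟩
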